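/- Let X be a shift space, φ : Σ → ℝ continuous, b = sup{∫φ dμ : μ ∈ M_X}, and ε > 0. Fix n ∈ ℕ, let F_n be the complement of L(X,n) in A^n, and let X_n be the subshift of finite type with forbidden words F_n. If Y is a transitive component of X_n with Y ∩ X ≠ ∅, then for every word w ∈ L(Y) there exists a periodic point y ∈ Y containing w as a subword such that ∫φ dμ_y < b + 4ε, where μ_y is the invariant probability measure equidistributed on the orbit of y. -/

import Mathlib

open Filter MeasureTheory Topology
open scoped BigOperators ENNReal

noncomputable section

namespace PaperStmt

/-- The full two-sided shift: bi-infinite sequences over the alphabet `Fin d`. -/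
abbrev FullShift (d : ℕ) := ℤ → Fin d

/-- The (left) shift map `f(x)_k = x_{k+1}`. -/
def shift (d : ℕ) : FullShift d → FullShift d := fun x k => x (k + 1)

/-- A (two-sided) shift space: a nonempty closed shift-invariant subset. -/
def IsShiftSpace {d : ℕ} (X : Set (FullShift d)) : Prop :=
  X.Nonempty ∧ IsClosed X ∧ shift d '' X = X

/-- The cylinder at position `0` determined by a word `w` of length `n`. -/
def cyl {d n : ℕ} (w : Fin n → Fin d) : Set (FullShift d) :=
  {x | ∀ i : Fin n, x ((i : ℕ) : ℤ) = w i}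

/-- The language of `X` in length `n`: words of length `n` occurring in elements of `X`
(at position `0`; for shift-invariant `X` this is occurrence anywhere). -/
def langSet {d : ℕ} (X : Set (FullShift d)) (n : ℕ) : Set (Fin n → Fin d) :=
  {w | (X ∩ cyl w).Nonempty}

/-- Birkhoff sum `S_n φ`. -/
def birkhoff {d : ℕ} (φ : FullShift d → ℝ) (n : ℕ) (x : FullShift d) : ℝ :=
  ∑ k ∈ Finset.range n, φ ((shift d)^[k] x)

open Classical in
/-- The `n`-th partition function `Z_n(φ)` of `X`. -/
def Zfun {d : ℕ} (X : Set (FullShift d)) (φ : FullShift d → ℝ) (n : ℕ) : ℝ :=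
  ∑ w : Fin n → Fin d,
    if (X ∩ cyl w).Nonempty then Real.exp (sSup (birkhoff φ n '' (X ∩ cyl w))) else 0

/-- Topological pressure `P_top(X,φ) = lim (1/n) log Z_n(φ) = inf_n (1/n) log Z_n(φ)`. -/
def pressure {d : ℕ} (X : Set (FullShift d)) (φ : FullShift d → ℝ) : ℝ :=
  ⨅ n : ℕ, (1 / (n + 1 : ℝ)) * Real.log (Zfun X φ (n + 1))

/-- Topological entropy `h_top(X) = inf_n (1/n) log |L(X,n)|`. -/
def entTop {d : ℕ} (X : Set (FullShift d)) : ℝ :=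
  ⨅ n : ℕ, (1 / (n + 1 : ℝ)) * Real.log ((langSet X (n + 1)).ncard : ℝ)

/-- The shift-invariant Borel probability measures giving `X` full measure. -/
def InvProb {d : ℕ} (X : Set (FullShift d)) : Set (Measure (FullShift d)) :=
  {μ | IsProbabilityMeasure μ ∧ μ.map (shift d) = μ ∧ μ X = 1}

/-- Measure-theoretic (Kolmogorov–Sinai) entropy of an invariant measure,
computed via cylinder sets: `h_μ = lim -(1/n) Σ_{|w|=n} μ[w] log μ[w]`. -/
def mEnt {d : ℕ} (μ : Measure (FullShift d)) : ℝ :=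
  Filter.liminf
    (fun n : ℕ => (1 / (n + 1 : ℝ)) *
      ∑ w : Fin (n + 1) → Fin d, Real.negMulLog (μ (cyl w)).toReal)
    Filter.atTop

/-- The free energy `h_μ(f) + ∫ φ dμ` of an invariant measure. -/
def freeEnergy {d : ℕ} (μ : Measure (FullShift d)) (φ : FullShift d → ℝ) : ℝ :=
  mEnt μ + ∫ x, φ x ∂μ

/-- `sup { ∫ φ dμ : μ ∈ M_X }`. -/
def intAvg {d : ℕ} (X : Set (FullShift d)) (φ : FullShift d → ℝ) : ℝ :=
  sSup {r | ∃ μ ∈ InvProb X, r = ∫ x, φ x ∂μ}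

/-- `μ` is an equilibrium state of `φ` on `X`. -/
def IsEqState {d : ℕ} (X : Set (FullShift d)) (φ : FullShift d → ℝ)
    (μ : Measure (FullShift d)) : Prop :=
  μ ∈ InvProb X ∧ freeEnergy μ φ = pressure X φ

/-- `p : ℤ → ℤ` parses `x` into consecutive generator blocks from `𝒢`:
the block of `x` from `p j` to `p (j+1) - 1` is a generator, for every `j`. -/
def IsParsing {d : ℕ} (𝒢 : Set (List (Fin d))) (x : FullShift d) (p : ℤ → ℤ) : Prop :=
  StrictMono p ∧ ∀ j : ℤ, ∃ g ∈ 𝒢,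
    p (j + 1) = p j + g.length ∧ ∀ (l : ℕ) (hl : l < g.length), x (p j + l) = g[l]

/-- `X_seq`: the set of bi-infinite concatenations of generators. -/
def Xseq {d : ℕ} (𝒢 : Set (List (Fin d))) : Set (FullShift d) :=
  {x | ∃ p : ℤ → ℤ, IsParsing 𝒢 x p}

/-- The coded shift generated by `𝒢`: the closure of `X_seq`. -/
def codedShift {d : ℕ} (𝒢 : Set (List (Fin d))) : Set (FullShift d) :=
  closure (Xseq 𝒢)

/-- `𝒢` is a unique representation: every `x ∈ X_seq` admits exactly one parsing
into generator blocks (i.e. the set of cut points is uniquely determined). -/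
def UniqueRep {d : ℕ} (𝒢 : Set (List (Fin d))) : Prop :=
  ∀ (x : FullShift d) (p q : ℤ → ℤ),
    IsParsing 𝒢 x p → IsParsing 𝒢 x q → Set.range p = Set.range q

/-- `P_seq(φ) = sup { h_μ + ∫φ dμ : μ ∈ M_X, μ(Xs) = 1 }`. -/
def PseqOf {d : ℕ} (X Xs : Set (FullShift d)) (φ : FullShift d → ℝ) : ℝ :=
  sSup {r | ∃ μ ∈ InvProb X, μ Xs = 1 ∧ r = freeEnergy μ φ}

/-- `P_lim(φ) = sup { h_μ + ∫φ dμ : μ ∈ M_X, μ(X \ Xs) = 1 }`. -/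
def PlimOf {d : ℕ} (X Xs : Set (FullShift d)) (φ : FullShift d → ℝ) : ℝ :=
  sSup {r | ∃ μ ∈ InvProb X, μ (X \ Xs) = 1 ∧ r = freeEnergy μ φ}

/-- `φ` has strict full sequential pressure: `P_seq(φ) > P_lim(φ)`. -/
def StrictFSP {d : ℕ} (X Xs : Set (FullShift d)) (φ : FullShift d → ℝ) : Prop :=
  PlimOf X Xs φ < PseqOf X Xs φ

/-- `φ ∈ FSSP(X)`: `φ` lies in the sup-norm closure (within `C(X,ℝ)`) of the
set of continuous potentials with strict full sequential pressure. -/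
def InFSSP {d : ℕ} (X Xs : Set (FullShift d)) (φ : FullShift d → ℝ) : Prop :=
  ∀ ε : ℝ, 0 < ε → ∃ ψ : FullShift d → ℝ, ContinuousOn ψ X ∧
    (∀ x ∈ X, |φ x - ψ x| ≤ ε) ∧ StrictFSP X Xs ψ

/-- The invariant probability measure equidistributed on the (period-`ℓ`) orbit of `y`. -/
def periodicMeasure {d : ℕ} (y : FullShift d) (ℓ : ℕ) : Measure (FullShift d) :=
  (ℓ : ℝ≥0∞)⁻¹ • ∑ k ∈ Finset.range ℓ, Measure.dirac ((shift d)^[k] y)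

/-- `y` is periodic with period `ℓ ≥ 1`. -/
def IsPeriodicOf {d : ℕ} (y : FullShift d) (ℓ : ℕ) : Prop :=
  1 ≤ ℓ ∧ (shift d)^[ℓ] y = y


/-- `Y` is a topologically transitive shift space. -/
def TopTransitive {d : ℕ} (Y : Set (FullShift d)) : Prop :=
  IsShiftSpace Y ∧ ∀ U V : Set (FullShift d), IsOpen U → IsOpen V →
    (Y ∩ U).Nonempty → (Y ∩ V).Nonempty →
    ∃ n : ℕ, ((shift d)^[n] '' (Y ∩ U) ∩ (Y ∩ V)).Nonempty

/-- `Y` is a transitive component of `Z`: a maximal transitive invariant subset. -/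
def IsTransComponent {d : ℕ} (Y Z : Set (FullShift d)) : Prop :=
  TopTransitive Y ∧ Y ⊆ Z ∧
    ∀ Y' : Set (FullShift d), TopTransitive Y' → Y' ⊆ Z → Y ⊆ Y' → Y = Y'

/-- The SFT `X_{F_n}` whose forbidden words `F_n` are the complement of `L(X,n)`:
the points all of whose length-`n` subwords lie in `L(X,n)`. -/
def sftApprox {d : ℕ} (X : Set (FullShift d)) (n : ℕ) : Set (FullShift d) :=
  {y | ∀ i : ℤ, (fun t : Fin n => y (i + (t : ℕ))) ∈ langSet X n}

section EmpiricalMeasures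

variable {d : ℕ}

theorem shift_iterate_apply (k : ℕ) (x : FullShift d) (i : ℤ) :
    (shift d)^[k] x i = x (i + k) := by
  induction k generalizing x with
  | zero => simp
  | succ k ih =>
    rw [Function.iterate_succ_apply, ih]
    simp only [shift]
    congr 1
    push_cast
    ring

theorem continuous_shift : Continuous (shift d) :=
  continuous_pi fun k => continuous_apply (k + 1)

theorem integral_periodicMeasure (φ : FullShift d → ℝ) (x : FullShift d) (N : ℕ) :
    ∫ z, φ z ∂(periodicMeasure x N) = birkhoff φ N x / N := by
  unfold periodicMeasure birkhoff
  rw [integral_smul_measure, integral_finsetSum_measure]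
  · simp [integral_dirac, div_eq_inv_mul]
  · exact fun k _ => integrable_dirac (by simp)

theorem periodicMeasure_apply_eq_one {X : Set (FullShift d)} {x : FullShift d}
    (hX : MeasurableSet X) (hx : ∀ k, (shift d)^[k] x ∈ X) {N : ℕ} (hN : N ≠ 0) :
    periodicMeasure x N X = 1 := by
  simp only [periodicMeasure, Measure.smul_apply, Measure.finsetSum_apply,
    Measure.dirac_apply' _ hX, smul_eq_mul]
  simp only [Set.indicator_of_mem (hx _), Pi.one_apply, Finset.sum_const, Finset.card_range,
    nsmul_eq_mul, mul_one]
  exact ENNReal.inv_mul_cancel (by exact_mod_cast hN) (by simp)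

theorem birkhoff_comp_shift_sub (g : FullShift d → ℝ) (x : FullShift d) (N : ℕ) :
    birkhoff (fun z => g (shift d z)) N x - birkhoff g N x = g ((shift d)^[N] x) - g x := by
  unfold birkhoff
  rw [← Finset.sum_sub_distrib]
  simp_rw [← Function.iterate_succ_apply' (shift d)]
  rw [Finset.sum_range_sub (fun k => g ((shift d)^[k] x))]
  simp

theorem IsShiftSpace.iterate_mem {X : Set (FullShift d)} (hX : IsShiftSpace X)
    {x : FullShift d} (hx : x ∈ X) (k : ℕ) : (shift d)^[k] x ∈ X := by
  induction k with
  | zero => exact hx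
  | succ k ih =>
    rw [Function.iterate_succ_apply']
    exact hX.2.2 ▸ Set.mem_image_of_mem _ ih

/-- A weak limit of the empirical measures of a point of `X`, along an ultrafilter. -/
theorem exists_invProb_tendsto {X : Set (FullShift d)} (hX : IsShiftSpace X)
    {x : FullShift d} (hx : x ∈ X) (U : Ultrafilter ℕ) (hU : (U : Filter ℕ) ≤ atTop) :
    ∃ μ ∈ InvProb X, ∀ g : FullShift d → ℝ, Continuous g →
      Tendsto (fun N : ℕ => birkhoff g N x / N) U (𝓝 (∫ z, g z ∂μ)) := by
  have hprob : ∀ N : ℕ, IsProbabilityMeasure (periodicMeasure x (N + 1)) := fun N =>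
    ⟨periodicMeasure_apply_eq_one MeasurableSet.univ (fun _ => Set.mem_univ _) N.succ_ne_zero⟩
  let P : ℕ → ProbabilityMeasure (FullShift d) := fun N =>
    ⟨periodicMeasure x (N - 1 + 1), hprob (N - 1)⟩
  obtain ⟨μ, -, hμ⟩ := isCompact_univ.ultrafilter_le_nhds (U.map P) (by simp)
  have hμ' : Tendsto P U (𝓝 μ) := hμ
  have hpos : ∀ᶠ N : ℕ in (U : Filter ℕ), 1 ≤ N := hU (eventually_ge_atTop 1)
  have hlim : ∀ g : FullShift d → ℝ, Continuous g →
      Tendsto (fun N : ℕ => birkhoff g N x / N) U (𝓝 (∫ z, g z ∂(μ : Measure (FullShift d)))) := by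
    intro g hg
    have h := ProbabilityMeasure.tendsto_iff_forall_integral_tendsto.1 hμ'
      (BoundedContinuousFunction.mkOfCompact ⟨g, hg⟩)
    refine h.congr' ?_
    filter_upwards [hpos] with N hN
    simp only [P, ProbabilityMeasure.coe_mk, BoundedContinuousFunction.mkOfCompact_apply,
      ContinuousMap.coe_mk]
    rw [integral_periodicMeasure g, Nat.sub_add_cancel hN]
  refine ⟨μ, ⟨inferInstance, ?_, ?_⟩, hlim⟩
  · have := Measure.isProbabilityMeasure_map (μ := (μ : Measure (FullShift d)))
      continuous_shift.measurable.aemeasurable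
    refine ext_of_forall_integral_eq_of_IsFiniteMeasure fun g => ?_
    rw [integral_map continuous_shift.measurable.aemeasurable
      g.continuous.aestronglyMeasurable]
    have h := (hlim _ (g.continuous.comp continuous_shift)).sub (hlim _ g.continuous)
    have h0 : Tendsto (fun N : ℕ => birkhoff (g ∘ shift d) N x / N - birkhoff g N x / N) U
        (𝓝 0) := by
      have hb : Tendsto (fun N : ℕ => (2 * ‖g‖) / (N : ℝ)) U (𝓝 0) :=
        (tendsto_const_div_atTop_nhds_zero_nat _).mono_left hU
      refine squeeze_zero_norm (fun N => ?_) hb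
      have := birkhoff_comp_shift_sub g x N
      rw [← sub_div]
      change ‖(birkhoff (fun z => g (shift d z)) N x - birkhoff g N x) / (N : ℝ)‖ ≤ _
      rw [this, norm_div, Real.norm_natCast]
      gcongr
      calc _ ≤ ‖g ((shift d)^[N] x)‖ + ‖g x‖ := norm_sub_le _ _
        _ ≤ 2 * ‖g‖ := by linarith [g.norm_coe_le_norm ((shift d)^[N] x), g.norm_coe_le_norm x]
    exact sub_eq_zero.1 (tendsto_nhds_unique h h0)
  · refine le_antisymm prob_le_one ?_
    have h := ProbabilityMeasure.limsup_measure_closed_le_of_tendsto hμ' hX.2.1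
    refine le_trans ?_ h
    have h1 : ∀ N, (P N : Measure (FullShift d)) X = 1 := fun N =>
      periodicMeasure_apply_eq_one hX.2.1.measurableSet (hX.iterate_mem hx) (Nat.succ_ne_zero _)
    simp [h1]

/-- Along the orbit of a point of `X`, Birkhoff averages eventually do not exceed the maximal
integral by more than `ε`. -/
theorem eventually_birkhoff_div_lt {X : Set (FullShift d)} (hX : IsShiftSpace X)
    {x : FullShift d} (hx : x ∈ X) {φ : FullShift d → ℝ} (hφ : Continuous φ)
    {B : ℝ} (hB : ∀ z, |φ z| ≤ B) {ε : ℝ} (hε : 0 < ε) :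
    ∀ᶠ N : ℕ in atTop, birkhoff φ N x / N < intAvg X φ + ε := by
  by_contra hcon
  have hfreq : ∃ᶠ N : ℕ in atTop, intAvg X φ + ε ≤ birkhoff φ N x / N := by
    simpa only [Filter.Frequently, not_le] using hcon
  have := Filter.frequently_iff_neBot.1 hfreq
  let U := Ultrafilter.of (atTop ⊓ 𝓟 {N : ℕ | intAvg X φ + ε ≤ birkhoff φ N x / N})
  have hUle := Ultrafilter.of_le (atTop ⊓ 𝓟 {N : ℕ | intAvg X φ + ε ≤ birkhoff φ N x / N})
  obtain ⟨μ, hμ, hlim⟩ := exists_invProb_tendsto hX hx U (hUle.trans inf_le_left)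
  have hge : intAvg X φ + ε ≤ ∫ z, φ z ∂μ :=
    ge_of_tendsto (hlim φ hφ) ((hUle.trans inf_le_right) (mem_principal_self _))
  have hbdd : BddAbove {r | ∃ μ ∈ InvProb X, r = ∫ x, φ x ∂μ} := by
    refine ⟨B, ?_⟩
    rintro r ⟨ν, ⟨hν, -, -⟩, rfl⟩
    have := norm_integral_le_of_norm_le_const (μ := ν) (f := φ) (Eventually.of_forall hB)
    simp only [probReal_univ, mul_one] at this
    exact (le_abs_self _).trans this
  have hle : ∫ z, φ z ∂μ ≤ intAvg X φ := le_csSup hbdd ⟨μ, hμ, rfl⟩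
  linarith

end EmpiricalMeasures

section Cylinders

variable {d : ℕ}

theorem isOpen_cyl {n : ℕ} (w : Fin n → Fin d) : IsOpen (cyl w) := by
  have : cyl w = ⋂ i : Fin n, (fun x : FullShift d => x ((i : ℕ) : ℤ)) ⁻¹' {w i} := by
    ext x
    simp [cyl]
  rw [this]
  exact isOpen_iInter_of_finite fun i =>
    (isOpen_discrete _).preimage (continuous_apply (((i : ℕ) : ℤ)))

theorem setOf_eq_on_natAbs_le_mem_nhds (z : FullShift d) (R : ℕ) :
    {z' : FullShift d | ∀ i : ℤ, i.natAbs ≤ R → z' i = z i} ∈ 𝓝 z := by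
  have : {z' : FullShift d | ∀ i : ℤ, i.natAbs ≤ R → z' i = z i} =
      (Set.Icc (-(R : ℤ)) R).pi fun i => {z i} := by
    ext z'
    simp only [Set.mem_ofPred_eq, Set.mem_pi, Set.mem_Icc, Set.mem_singleton_iff]
    exact forall_congr' fun i => ⟨fun h hi => h (by omega), fun h hi => h (by omega)⟩
  rw [this]
  exact set_pi_mem_nhds (Set.finite_Icc _ _) fun i _ => by simp

theorem exists_natAbs_le_subset_of_mem_nhds {U : Set (FullShift d)} {z : FullShift d}
    (hU : U ∈ 𝓝 z) :
    ∃ R : ℕ, ∀ z' : FullShift d, (∀ i : ℤ, i.natAbs ≤ R → z' i = z i) → z' ∈ U := by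
  obtain ⟨V, hVU, hV, hzV⟩ := mem_nhds_iff.1 hU
  obtain ⟨I, u, hu, hsub⟩ := isOpen_pi_iff.1 hV z hzV
  refine ⟨I.sup Int.natAbs, fun z' hz' => hVU (hsub fun i hi => ?_)⟩
  rw [hz' i (Finset.le_sup (f := Int.natAbs) hi)]
  exact (hu i hi).2

theorem exists_natAbs_le_abs_sub_lt {φ : FullShift d → ℝ} (hφ : Continuous φ) {ε : ℝ}
    (hε : 0 < ε) :
    ∃ R : ℕ, ∀ z z' : FullShift d, (∀ i : ℤ, i.natAbs ≤ R → z i = z' i) →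
      |φ z - φ z'| < ε := by
  have hloc : ∀ c : FullShift d, ∃ R : ℕ, ∀ z : FullShift d,
      (∀ i : ℤ, i.natAbs ≤ R → z i = c i) → |φ z - φ c| < ε / 2 := fun c =>
    exists_natAbs_le_subset_of_mem_nhds
      (hφ.continuousAt.preimage_mem_nhds (Metric.ball_mem_nhds (φ c) (half_pos hε)))
  choose R hR using hloc
  obtain ⟨t, -, ht⟩ := isCompact_univ.elim_nhds_subcover
    (fun c : FullShift d => {z : FullShift d | ∀ i : ℤ, i.natAbs ≤ R c → z i = c i})
    (fun c _ => setOf_eq_on_natAbs_le_mem_nhds c (R c))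
  refine ⟨t.sup R, fun z z' hzz' => ?_⟩
  obtain ⟨c, hct, hzc⟩ := Set.mem_iUnion₂.1 (ht (Set.mem_univ z))
  have h1 := hR c z hzc
  have h2 := hR c z' fun i hi => by
    rw [← hzz' i (hi.trans (Finset.le_sup hct)), hzc i hi]
  rw [abs_lt] at *
  constructor <;> linarith [h1.1, h1.2, h2.1, h2.2]

theorem IsShiftSpace.translate_mem {Y : Set (FullShift d)} (hY : IsShiftSpace Y)
    {y : FullShift d} (hy : y ∈ Y) (i : ℤ) : (fun k => y (k + i)) ∈ Y := by
  induction i with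
  | zero => simpa using hy
  | succ i ih =>
    have := hY.iterate_mem ih 1
    convert! this using 1
    funext k
    simp only [Function.iterate_one, shift]
    congr 1
    ring
  | pred i ih =>
    rw [← hY.2.2] at ih
    obtain ⟨y', hy', he⟩ := ih
    convert! hy' using 1
    funext k
    have := congrFun he (k - 1)
    simp only [shift, sub_add_cancel] at this
    rw [this]
    congr 1
    ring

theorem IsShiftSpace.window_mem {Y : Set (FullShift d)} (hY : IsShiftSpace Y)
    {y : FullShift d} (hy : y ∈ Y) (i : ℤ) (n : ℕ) :
    (fun t : Fin n => y (i + (t : ℕ))) ∈ langSet Y n :=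
  ⟨_, hY.translate_mem hy i, fun t => by simp only [add_comm]⟩

/-- Two words of a transitive shift space occur, in order, in a common point; `j` is the offset. -/
theorem TopTransitive.exists_connecting {Y : Set (FullShift d)} (hY : TopTransitive Y)
    {n : ℕ} {v v' : Fin n → Fin d} (hv : v ∈ langSet Y n) (hv' : v' ∈ langSet Y n) :
    ∃ j : ℕ, ∃ q ∈ Y, (∀ t : Fin n, q (t : ℕ) = v t) ∧
      ∀ t : Fin n, q ((j : ℤ) + (t : ℕ)) = v' t := by
  obtain ⟨j, _, ⟨q, ⟨hqY, hq⟩, rfl⟩, -, hq'⟩ := hY.2 _ _ (isOpen_cyl v) (isOpen_cyl v') hv hv'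
  refine ⟨j, q, hqY, hq, fun t => ?_⟩
  rw [← hq' t, shift_iterate_apply, add_comm]

theorem TopTransitive.exists_connecting_le {Y : Set (FullShift d)} (hY : TopTransitive Y)
    (n : ℕ) :
    ∃ C : ℕ, ∀ v ∈ langSet Y n, ∀ v' ∈ langSet Y n,
      ∃ j ≤ C, ∃ q ∈ Y, (∀ t : Fin n, q (t : ℕ) = v t) ∧
        ∀ t : Fin n, q ((j : ℤ) + (t : ℕ)) = v' t := by
  have h : ∀ p : (Fin n → Fin d) × (Fin n → Fin d), ∃ j : ℕ,
      p.1 ∈ langSet Y n → p.2 ∈ langSet Y n → ∃ q ∈ Y, (∀ t : Fin n, q (t : ℕ) = p.1 t) ∧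
        ∀ t : Fin n, q ((j : ℤ) + (t : ℕ)) = p.2 t := by
    intro p
    by_cases hp : p.1 ∈ langSet Y n ∧ p.2 ∈ langSet Y n
    · obtain ⟨j, hj⟩ := hY.exists_connecting hp.1 hp.2
      exact ⟨j, fun _ _ => hj⟩
    · exact ⟨0, fun h1 h2 => absurd ⟨h1, h2⟩ hp⟩
  choose j hj using h
  obtain ⟨C, hC⟩ := (Set.finite_range j).bddAbove
  exact ⟨C, fun v hv v' hv' => ⟨j (v, v'), hC ⟨_, rfl⟩, hj (v, v') hv hv'⟩⟩

end Cylinders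

section Gluing

variable {d : ℕ}

/-- The point equal to `z` before position `a` and to `p`, read from position `b`, afterwards. -/
def glue (z p : FullShift d) (a b : ℤ) : FullShift d :=
  fun i => if i < a then z i else p (i - a + b)

theorem glue_of_lt {z p : FullShift d} {a b i : ℤ} (h : i < a) : glue z p a b i = z i :=
  if_pos h

theorem glue_add (z p : FullShift d) (a b : ℤ) (t : ℕ) :
    glue z p a b (a + t) = p (b + t) := by
  unfold glue
  rw [if_neg (by omega)]
  congr 1
  ring

theorem glue_mem_sftApprox {Y : Set (FullShift d)} {n : ℕ} {z p : FullShift d} {a b : ℤ}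
    (hz : z ∈ sftApprox Y n) (hp : p ∈ sftApprox Y n)
    (h : ∀ t : Fin n, z (a + (t : ℕ)) = p (b + (t : ℕ))) :
    glue z p a b ∈ sftApprox Y n := by
  intro i
  by_cases hi : i < a
  · convert! hz i using 1
    funext t
    by_cases hit : i + (t : ℕ) < a
    · exact glue_of_lt hit
    · obtain ⟨s, hs⟩ := Int.eq_ofNat_of_zero_le (show 0 ≤ i + (t : ℕ) - a by omega)
      have hsn : s < n := by omega
      rw [show i + ((t : ℕ) : ℤ) = a + (s : ℕ) by omega, glue_add]
      exact (h ⟨s, hsn⟩).symm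
  · convert! hp (i - a + b) using 1
    funext t
    unfold glue
    rw [if_neg (by omega)]
    congr 1
    ring

theorem IsShiftSpace.subset_sftApprox {Y : Set (FullShift d)} (hY : IsShiftSpace Y) (n : ℕ) :
    Y ⊆ sftApprox Y n :=
  fun _ hy i => hY.window_mem hy i n

theorem isShiftSpace_sftApprox {Y : Set (FullShift d)} (hY : IsShiftSpace Y) (n : ℕ) :
    IsShiftSpace (sftApprox Y n) := by
  refine ⟨hY.1.mono (hY.subset_sftApprox n), ?_, ?_⟩
  · have : sftApprox Y n =
        ⋂ i : ℤ, (fun (y : FullShift d) (t : Fin n) => y (i + (t : ℕ))) ⁻¹' langSet Y n := by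
      ext y
      simp [sftApprox]
    rw [this]
    exact isClosed_iInter fun i => (isClosed_discrete _).preimage
      (continuous_pi fun t : Fin n => continuous_apply (i + ((t : ℕ) : ℤ)))
  · ext y
    constructor
    · rintro ⟨z, hz, rfl⟩ i
      convert! hz (i + 1) using 1
      funext t
      simp only [shift]
      congr 1
      ring
    · intro hy
      refine ⟨fun k => y (k - 1), fun i => ?_, by funext k; simp [shift]⟩
      convert! hy (i - 1) using 1
      funext t
      rw [sub_add_eq_add_sub]

theorem topTransitive_sftApprox {Y : Set (FullShift d)} (hY : TopTransitive Y) (n : ℕ) :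
    TopTransitive (sftApprox Y n) := by
  refine ⟨isShiftSpace_sftApprox hY.1 n, ?_⟩
  rintro U V hU hV ⟨z, hz, hzU⟩ ⟨z', hz', hzV⟩
  obtain ⟨R₁, hR₁⟩ := exists_natAbs_le_subset_of_mem_nhds (hU.mem_nhds hzU)
  obtain ⟨R₂, hR₂⟩ := exists_natAbs_le_subset_of_mem_nhds (hV.mem_nhds hzV)
  obtain ⟨j, q, hq, hqz, hqz'⟩ := hY.exists_connecting (hz (R₁ + 1)) (hz' (-R₂))
  have hg₁ : glue z q (R₁ + 1) 0 ∈ sftApprox Y n :=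
    glue_mem_sftApprox hz (hY.1.subset_sftApprox n hq) fun t => by rw [zero_add, hqz]
  have hg₂ : glue (glue z q (R₁ + 1) 0) z' (R₁ + 1 + j) (-R₂) ∈ sftApprox Y n := by
    refine glue_mem_sftApprox hg₁ hz' fun t => ?_
    rw [← hqz' t, add_assoc, ← Nat.cast_add, glue_add]
    simp
  refine ⟨R₁ + 1 + j + R₂, _, ⟨_, ⟨hg₂, hR₁ _ fun i hi => ?_⟩, rfl⟩,
    (isShiftSpace_sftApprox hY.1 n).iterate_mem hg₂ _, hR₂ _ fun i hi => ?_⟩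
  · rw [glue_of_lt (by omega), glue_of_lt (by omega)]
  · obtain ⟨s, hs⟩ := Int.eq_ofNat_of_zero_le (show 0 ≤ i + R₂ by omega)
    rw [shift_iterate_apply,
      show i + ((R₁ + 1 + j + R₂ : ℕ) : ℤ) = (R₁ + 1 + j : ℤ) + (s : ℕ) by push_cast; omega,
      glue_add]
    congr 1
    omega

theorem IsTransComponent.eq_sftApprox {X Y : Set (FullShift d)} {n : ℕ}
    (hY : IsTransComponent Y (sftApprox X n)) : Y = sftApprox Y n := by
  refine hY.2.2 _ (topTransitive_sftApprox hY.1 n) (fun y hy i => ?_)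
    (hY.1.1.subset_sftApprox n)
  obtain ⟨u, huY, hu⟩ := hy i
  convert! hY.2.1 huY 0 using 1
  funext t
  rw [zero_add, hu t]

/-- Periodic repetition of the first `L` symbols of `z`. -/
def periodize (z : FullShift d) (L : ℕ) : FullShift d := fun i => z (i % L)

theorem periodize_of_lt {z : FullShift d} {L i : ℕ} (h : i < L) :
    periodize z L i = z i := by
  unfold periodize
  rw [Int.emod_eq_of_lt (by omega) (by omega)]

theorem shift_iterate_periodize (z : FullShift d) (L : ℕ) :
    (shift d)^[L] (periodize z L) = periodize z L := by
  funext i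
  rw [shift_iterate_apply]
  simp [periodize]

theorem periodize_mem_sftApprox {Y : Set (FullShift d)} {n L : ℕ} {z : FullShift d}
    (hL : 1 ≤ L) (hz : z ∈ sftApprox Y n)
    (h : ∀ t : Fin n, z ((L : ℤ) + (t : ℕ)) = z (t : ℕ)) :
    periodize z L ∈ sftApprox Y n := by
  have key : ∀ k : ℕ, k < L + n → periodize z L k = z k := by
    intro k
    induction k using Nat.strong_induction_on with
    | _ k ih =>
      intro hk
      by_cases hkL : k < L
      · exact periodize_of_lt hkL
      · obtain ⟨s, rfl⟩ := Nat.exists_eq_add_of_le (not_lt.1 hkL)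
        have h1 := ih s (by omega) (by omega)
        have h2 := h ⟨s, by omega⟩
        push_cast
        rw [h2, ← h1]
        simp [periodize]
  intro i
  convert! hz (i % L) using 1
  funext t
  have h0 : 0 ≤ i % (L : ℤ) := Int.emod_nonneg _ (by omega)
  have h1 : i % (L : ℤ) < L := Int.emod_lt_of_pos _ (by omega)
  obtain ⟨r, hr⟩ := Int.eq_ofNat_of_zero_le h0
  have h2 := key (r + t) (by omega)
  rw [hr]
  push_cast at h2
  rw [← h2, ← hr]
  simp [periodize]

/-- In a transitive shift space of finite type, a given word and arbitrarily long initial segments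
of a given point occur in a common periodic orbit, with bounded excess length. -/
theorem exists_periodic_shadowing {Y : Set (FullShift d)} {n m : ℕ} (hY : TopTransitive Y)
    (hYn : Y = sftApprox Y n) {x : FullShift d} (hx : x ∈ Y) {w : Fin m → Fin d}
    (hw : w ∈ langSet Y m) :
    ∃ a C : ℕ, ∀ N : ℕ, 1 ≤ N → ∃ c ≤ C, ∃ y ∈ Y, (shift d)^[a + N + c] y = y ∧
      (∀ t : Fin m, y (t : ℕ) = w t) ∧ ∀ i : ℕ, i < N → y ((a : ℤ) + i) = x i := by
  obtain ⟨p, hpY, hpw⟩ := hw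
  obtain ⟨j, q, hq, hqp, hqx⟩ :=
    hY.exists_connecting (hY.1.window_mem hpY m n) (hY.1.window_mem hx 0 n)
  obtain ⟨C, hC⟩ := hY.exists_connecting_le n
  have hg₁ : glue p q m 0 ∈ Y := by
    rw [hYn] at hpY hq ⊢
    exact glue_mem_sftApprox hpY hq fun t => by rw [zero_add, hqp]
  let g := glue (glue p q m 0) x (m + j) 0
  have hg : g ∈ Y := by
    rw [hYn] at hg₁ hx ⊢
    refine glue_mem_sftApprox hg₁ hx fun t => ?_
    rw [← hqx t, add_assoc, ← Nat.cast_add, glue_add]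
    simp
  have hgx : ∀ i : ℕ, g ((m + j : ℕ) + i) = x i := fun i => by
    simp only [g]
    rw [Nat.cast_add, glue_add, zero_add]
  have hgw : ∀ t : Fin m, g (t : ℕ) = w t := fun t => by
    have := t.2
    simp only [g]
    rw [glue_of_lt (by omega), glue_of_lt (by omega), hpw]
  refine ⟨m + j, C, fun N hN => ?_⟩
  obtain ⟨c, hc, q', hq', hq'g, hq'w⟩ :=
    hC _ (hY.1.window_mem hg (m + j + N : ℕ) n) _ (hY.1.window_mem hg 0 n)
  let z := glue g q' (m + j + N : ℕ) 0
  have hz : z ∈ sftApprox Y n :=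
    glue_mem_sftApprox (hYn ▸ hg) (hYn ▸ hq') fun t => by rw [zero_add, hq'g]
  have hzg : ∀ i : ℤ, i < (m + j + N + n : ℕ) → z i = g i := by
    intro i hi
    by_cases h : i < (m + j + N : ℕ)
    · exact glue_of_lt h
    · obtain ⟨s, hs⟩ := Int.eq_ofNat_of_zero_le (show 0 ≤ i - (m + j + N : ℕ) by omega)
      rw [show i = (m + j + N : ℕ) + (s : ℤ) by omega]
      simp only [z]
      rw [glue_add, zero_add]
      exact hq'g ⟨s, by omega⟩
  have hper : ∀ t : Fin n, z (((m + j + N + c : ℕ) : ℤ) + (t : ℕ)) = z (t : ℕ) := by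
    intro t
    rw [hzg (t : ℕ) (by omega), Nat.cast_add, add_assoc, ← Nat.cast_add c]
    simp only [z]
    rw [glue_add]
    push_cast
    rw [zero_add, hq'w, zero_add]
  refine ⟨c, hc, periodize z (m + j + N + c), ?_, shift_iterate_periodize _ _, ?_, ?_⟩
  · rw [hYn]
    exact periodize_mem_sftApprox (by omega) hz hper
  · intro t
    rw [periodize_of_lt (by omega), hzg _ (by omega), hgw]
  · intro i hi
    rw [← Nat.cast_add, periodize_of_lt (by omega), hzg _ (by omega), Nat.cast_add, hgx]

end Gluing

/-- Comparison of Birkhoff sums of `y` with those of a point `x` whose first `N` symbols occur in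
`y` at position `a`. -/
theorem birkhoff_le_of_shadowing {d : ℕ} {φ : FullShift d → ℝ} {B ε : ℝ}
    (hB : ∀ z, |φ z| ≤ B) (hε : 0 ≤ ε) {R : ℕ}
    (hR : ∀ z z' : FullShift d, (∀ i : ℤ, i.natAbs ≤ R → z i = z' i) → |φ z - φ z'| < ε)
    {x y : FullShift d} {a N : ℕ} (c : ℕ)
    (hxy : ∀ i : ℕ, i < N → y ((a : ℤ) + i) = x i) :
    birkhoff φ (a + N + c) y ≤ birkhoff φ N x + N * ε + 4 * R * B + (a + c) * B := by
  have hB0 : 0 ≤ B := (abs_nonneg _).trans (hB x)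
  have hle : ∀ z, φ z ≤ B := fun z => (le_abs_self _).trans (hB z)
  let S := (Finset.range N).filter fun k => k < R ∨ N ≤ k + R
  have hS : S.card ≤ 2 * R := by
    have hsub : S ⊆ Finset.range R ∪ Finset.Ico (N - R) N := by
      intro k hk
      simp only [S, Finset.mem_filter, Finset.mem_range, Finset.mem_union, Finset.mem_Ico] at *
      omega
    refine (Finset.card_le_card hsub).trans ((Finset.card_union_le _ _).trans ?_)
    rw [Finset.card_range, Nat.card_Ico]
    omega
  have hmid : ∀ k ∈ Finset.range N, φ ((shift d)^[a + k] y) ≤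
      φ ((shift d)^[k] x) + ε + if k < R ∨ N ≤ k + R then 2 * B else 0 := by
    intro k hk
    rw [Finset.mem_range] at hk
    split_ifs with h
    · linarith [hle ((shift d)^[a + k] y), (abs_le.1 (hB ((shift d)^[k] x))).1]
    · have := hR ((shift d)^[a + k] y) ((shift d)^[k] x) fun i hi => by
        obtain ⟨s, hs⟩ := Int.eq_ofNat_of_zero_le (show 0 ≤ i + k by omega)
        rw [shift_iterate_apply, shift_iterate_apply,
          show i + ((a + k : ℕ) : ℤ) = (a : ℤ) + (s : ℕ) by push_cast; omega,
          hxy s (by omega), hs]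
      linarith [(abs_lt.1 this).2]
  have hsum : ∑ k ∈ Finset.range N, φ ((shift d)^[a + k] y) ≤
      birkhoff φ N x + N * ε + 4 * R * B := by
    refine (Finset.sum_le_sum hmid).trans ?_
    rw [Finset.sum_add_distrib, Finset.sum_add_distrib, ← Finset.sum_filter]
    simp only [Finset.sum_const, Finset.card_range, nsmul_eq_mul, birkhoff]
    have : (S.card : ℝ) ≤ 2 * R := by exact_mod_cast hS
    change _ + _ + (S.card : ℝ) * (2 * B) ≤ _
    nlinarith
  have hconst : ∀ (b s : ℕ), ∑ k ∈ Finset.range s, φ ((shift d)^[b + k] y) ≤ s * B := by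
    intro b s
    refine (Finset.sum_le_sum fun k _ => hle _).trans ?_
    simp
  have h1 := hconst 0 a
  have h2 := hconst (a + N) c
  simp only [zero_add] at h1
  rw [birkhoff, Finset.sum_range_add, Finset.sum_range_add]
  linarith

/-- in a transitive component `Y` of the SFT approximation `X_n`
meeting `X`, every word `w ∈ L(Y)` is contained in a periodic point `y ∈ Y` whose
orbit measure satisfies `∫φ dμ_y < b + 4ε`. -/
theorem statement5 {d : ℕ} (hd : 2 ≤ d) (X : Set (FullShift d)) (hX : IsShiftSpace X)
    (φ : FullShift d → ℝ) (hφ : Continuous φ) (ε : ℝ) (hε : 0 < ε) (n : ℕ)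
    (Y : Set (FullShift d)) (hY : IsTransComponent Y (sftApprox X n))
    (hYX : (Y ∩ X).Nonempty) {m : ℕ} (w : Fin m → Fin d) (hw : w ∈ langSet Y m) :
    ∃ ℓ : ℕ, ∃ y ∈ Y, IsPeriodicOf y ℓ ∧
      (∃ i : ℤ, ∀ t : Fin m, y (i + (t : ℕ)) = w t) ∧
      ∫ x, φ x ∂(periodicMeasure y ℓ) < intAvg X φ + 4 * ε := by
  obtain ⟨x, hxY, hxX⟩ := hYX
  obtain ⟨B, hB⟩ : ∃ B, ∀ z, |φ z| ≤ B := by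
    obtain ⟨B, hB⟩ := isCompact_univ.exists_bound_of_continuousOn hφ.continuousOn
    exact ⟨B, fun z => hB z (Set.mem_univ z)⟩
  obtain ⟨R, hR⟩ := exists_natAbs_le_abs_sub_lt hφ hε
  obtain ⟨a, C, hper⟩ := exists_periodic_shadowing hY.1 hY.eq_sftApprox hxY hw
  have hB0 : 0 ≤ B := (abs_nonneg _).trans (hB x)
  set b := intAvg X φ with hb
  have hlarge : ∀ᶠ N : ℕ in atTop, 4 * R * B + (a + C) * (B + |b|) < N * (2 * ε) :=
    (tendsto_natCast_atTop_atTop.atTop_mul_const (by positivity)).eventually_gt_atTop _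
  obtain ⟨N, hN, hNb, hN1⟩ := (hlarge.and
    ((eventually_birkhoff_div_lt hX hxX hφ hB hε).and (eventually_ge_atTop 1))).exists
  obtain ⟨c, hc, y, hyY, hyper, hyw, hyx⟩ := hper N hN1
  refine ⟨a + N + c, y, hyY, ⟨by omega, hyper⟩, ⟨0, fun t => by rw [zero_add, hyw]⟩, ?_⟩
  have hNpos : (0 : ℝ) < N := by exact_mod_cast hN1
  have hLpos : (0 : ℝ) < (a + N + c : ℕ) := by exact_mod_cast (by omega : 0 < a + N + c)
  rw [integral_periodicMeasure φ, div_lt_iff₀ hLpos]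
  rw [div_lt_iff₀ hNpos, ← hb] at hNb
  have hsum := birkhoff_le_of_shadowing hB hε.le hR c hyx
  have hcC : (c : ℝ) ≤ C := by exact_mod_cast hc
  have h1 : ((a : ℝ) + c) * (B + |b|) ≤ (a + C) * (B + |b|) := by gcongr
  have h2 : -(((a : ℝ) + c) * |b|) ≤ (a + c) * b := by
    have := mul_le_mul_of_nonneg_left (neg_abs_le b) (by positivity : (0 : ℝ) ≤ a + c)
    linarith
  have h3 : 0 ≤ ((a : ℝ) + c) * ε := by positivity
  push_cast
  nlinarith

end PaperStmt
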